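/- Fix N ≥ 1 and m ≥ 1, and let A_m(ℓ) denote the number of pairs of binary strings of length ℓ whose digit-sum sequence avoids the pattern P(m). Then the number of pairs (x, y) of N-bit binary numbers for which m-truncated addition agrees with ordinary addition modulo 2^N, i.e. #{(x,y) ∈ {0,…,2^N−1}^2 : x +_m y ≡ x + y (mod 2^N)}, equals 4 · A_m(N−1). Equivalently, the probability that x +_m y = x + y for uniformly chosen N-bit x and y is A_m(N−1)/4^{N−1}. -/

import Mathlib

/-!
Ordinary addition modulo `2 ^ N` has the digits `x_i ⊕ y_i ⊕ c_i`, where the true carry `c_i` is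
`1` iff some position `j < i` generates a carry (both digits are `1`) which all positions strictly
between `j` and `i` propagate (digit sum `1`). Such a `j` is unique, as a generating position does
not propagate, so the truncated carry at `i` is the true one unless `i - j > m`. By uniqueness of
binary digits, truncated and ordinary addition therefore agree iff no carry into a position below
`N` travels more than `m` places; cutting a longer journey down to `m + 1` places, this says that
`P(m)` does not occur in the lowest `N - 1` positions. The two top digits being free gives the
factor `4`.
-/

/-- The `i`-th binary digit of `x`. -/
def bitd (x i : ℕ) : ℕ := (x / 2 ^ i) % 2

open Classical in
/-- The `m`-truncated carry bit at position `i`: it is 1 iff there is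
`i - m ≤ j < i` with `(x_j, y_j) = (1,1)` and `x_k + y_k = 1` for all `j < k < i`. -/
noncomputable def tcarry (m x y i : ℕ) : ℕ :=
  if ∃ j, i - m ≤ j ∧ j < i ∧ bitd x j = 1 ∧ bitd y j = 1 ∧
      (∀ k, j < k → k < i → bitd x k + bitd y k = 1) then 1 else 0

/-- The `m`-truncated addition of `N`-bit numbers: the bitwise xor of `x`, `y`
and the truncated carry array. -/
noncomputable def tadd (N m x y : ℕ) : ℕ :=
  ∑ i ∈ Finset.range N, ((bitd x i + bitd y i + tcarry m x y i) % 2) * 2 ^ i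

/-- The digit-sum sequence of the pair of length-`ℓ` binary strings `(x,y)` avoids the
pattern `P(m)`: there is no index `j` (with the whole pattern inside positions
`0, …, ℓ - 1`) where the digit sum is `2` directly followed by `m` consecutive
digit sums equal to `1`. -/
def avoids (m ℓ x y : ℕ) : Prop :=
  ∀ j, j + m + 1 ≤ ℓ →
    ¬(bitd x j + bitd y j = 2 ∧ ∀ k, j < k → k ≤ j + m → bitd x k + bitd y k = 1)

open Classical in
/-- `A m ℓ` counts the pairs of length-`ℓ` binary strings whose digit-sum
sequence avoids the pattern `P(m)`. -/
noncomputable def A (m ℓ : ℕ) : ℕ :=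
  ((Finset.range (2 ^ ℓ) ×ˢ Finset.range (2 ^ ℓ)).filter fun p => avoids m ℓ p.1 p.2).card

section Digits

lemma mod_pow_div_pow_mod (b z : ℕ) {i n : ℕ} (hi : i < n) :
    z % b ^ n / b ^ i % b = z / b ^ i % b := by
  obtain ⟨k, rfl⟩ := Nat.exists_eq_add_of_lt hi
  rw [show b ^ (i + k + 1) = b ^ i * (b * b ^ k) by ring, Nat.mod_mul_right_div_self,
    Nat.mod_mul_right_mod]

lemma sum_mul_pow_eq_mod_pow_iff {b n : ℕ} {d : ℕ → ℕ} (hd : ∀ i < n, d i < b) (z : ℕ) :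
    ∑ i ∈ Finset.range n, d i * b ^ i = z % b ^ n ↔ ∀ i < n, d i = z / b ^ i % b := by
  have hpos : 0 < b ^ n := by
    rcases n with _ | n
    · exact Nat.one_pos
    · exact pow_pos (Nat.zero_lt_of_lt (hd 0 n.succ_pos)) _
  let digits : Fin n → Fin b := fun i ↦ ⟨d i, hd i i.isLt⟩
  calc ∑ i ∈ Finset.range n, d i * b ^ i = z % b ^ n
      ↔ finFunctionFinEquiv digits = ⟨z % b ^ n, Nat.mod_lt z hpos⟩ := by
        rw [Fin.ext_iff, finFunctionFinEquiv_apply, ← Fin.sum_univ_eq_sum_range]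
    _ ↔ ∀ i : Fin n, d i = z % b ^ n / b ^ (i : ℕ) % b := by
        rw [← Equiv.eq_symm_apply, funext_iff]
        exact forall_congr' fun i ↦ Fin.ext_iff
    _ ↔ ∀ i < n, d i = z / b ^ i % b := by
        rw [Fin.forall_iff]
        exact forall₂_congr fun i hi ↦ by rw [mod_pow_div_pow_mod b z hi]

lemma bitd_lt_two (x i : ℕ) : bitd x i < 2 := Nat.mod_lt _ two_pos

lemma bitd_mod_two_pow (x : ℕ) {i n : ℕ} (hi : i < n) : bitd (x % 2 ^ n) i = bitd x i :=
  mod_pow_div_pow_mod 2 x hi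

lemma mod_two_pow_succ_eq_add_bitd (x i : ℕ) :
    x % 2 ^ (i + 1) = x % 2 ^ i + 2 ^ i * bitd x i :=
  Nat.mod_pow_succ

end Digits

section Carry

/-- The carry into position `i` in the ordinary addition of `x` and `y`, in the form in which it
appears in `Nat.add_div`. -/
def carry (x y i : ℕ) : ℕ := if 2 ^ i ≤ x % 2 ^ i + y % 2 ^ i then 1 else 0

/-- A carry generated at position `j` is propagated up to position `i`: the carry condition of
`tcarry` without the truncation. -/
def CarriesTo (x y j i : ℕ) : Prop :=
  j < i ∧ bitd x j = 1 ∧ bitd y j = 1 ∧ ∀ k, j < k → k < i → bitd x k + bitd y k = 1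

variable {x y i j k m n : ℕ}

lemma carry_le_one (x y i : ℕ) : carry x y i ≤ 1 := by
  unfold carry
  split_ifs <;> simp

lemma bitd_add (x y i : ℕ) : bitd (x + y) i = (bitd x i + bitd y i + carry x y i) % 2 := by
  have hdiv : (x + y) / 2 ^ i = x / 2 ^ i + y / 2 ^ i + carry x y i :=
    Nat.add_div (Nat.two_pow_pos i)
  simp only [bitd, hdiv]
  omega

lemma carry_eq_one_iff_le (x y i : ℕ) : carry x y i = 1 ↔ 2 ^ i ≤ x % 2 ^ i + y % 2 ^ i := by
  simp [carry]

lemma carry_succ_eq_one_iff (x y i : ℕ) :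
    carry x y (i + 1) = 1 ↔ 2 ≤ bitd x i + bitd y i + carry x y i := by
  have hx : x % 2 ^ i < 2 ^ i := Nat.mod_lt _ (Nat.two_pow_pos i)
  have hy : y % 2 ^ i < 2 ^ i := Nat.mod_lt _ (Nat.two_pow_pos i)
  have hxi := bitd_lt_two x i
  have hyi := bitd_lt_two y i
  have hc := carry_le_one x y i
  have hc_iff := carry_eq_one_iff_le x y i
  rw [carry_eq_one_iff_le, mod_two_pow_succ_eq_add_bitd, mod_two_pow_succ_eq_add_bitd, pow_succ]
  interval_cases bitd x i <;> interval_cases bitd y i <;> omega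

lemma CarriesTo.mono (h : CarriesTo x y j i) (hjk : j < k) (hki : k ≤ i) : CarriesTo x y j k :=
  ⟨hjk, h.2.1, h.2.2.1, fun l hjl hlk ↦ h.2.2.2 l hjl (hlk.trans_le hki)⟩

lemma CarriesTo.unique (h : CarriesTo x y j i) (h' : CarriesTo x y k i) : j = k := by
  obtain ⟨hji, hxj, hyj, hj⟩ := h
  obtain ⟨hki, hxk, hyk, hk⟩ := h'
  rcases lt_trichotomy j k with hjk | hjk | hkj
  · have := hj k hjk hki
    omega
  · exact hjk
  · have := hk j hkj hji
    omega

lemma carriesTo_succ_iff : CarriesTo x y j (i + 1) ↔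
    (j = i ∧ bitd x i = 1 ∧ bitd y i = 1) ∨ (CarriesTo x y j i ∧ bitd x i + bitd y i = 1) := by
  constructor
  · rintro ⟨hji, hx, hy, hprop⟩
    rcases Nat.lt_succ_iff_lt_or_eq.1 hji with hlt | rfl
    · exact .inr ⟨⟨hlt, hx, hy, fun k hjk hki ↦ hprop k hjk (hki.trans i.lt_succ_self)⟩,
        hprop i hlt i.lt_succ_self⟩
    · exact .inl ⟨rfl, hx, hy⟩
  · rintro (⟨rfl, hx, hy⟩ | ⟨⟨hji, hx, hy, hprop⟩, hi⟩)
    · exact ⟨j.lt_succ_self, hx, hy, fun k hjk hkj ↦ by omega⟩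
    · refine ⟨hji.trans i.lt_succ_self, hx, hy, fun k hjk hki ↦ ?_⟩
      rcases Nat.lt_succ_iff_lt_or_eq.1 hki with hlt | rfl
      · exact hprop k hjk hlt
      · exact hi

lemma carry_eq_one_iff_exists_carriesTo : carry x y i = 1 ↔ ∃ j, CarriesTo x y j i := by
  induction i with
  | zero => simp [carry, CarriesTo, Nat.mod_one]
  | succ i ih =>
    have hx := bitd_lt_two x i
    have hy := bitd_lt_two y i
    have hc := carry_le_one x y i
    simp only [carry_succ_eq_one_iff, carriesTo_succ_iff, exists_or, exists_and_right, exists_eq,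
      true_and, ← ih]
    omega

lemma tcarry_le_one (m x y i : ℕ) : tcarry m x y i ≤ 1 := by
  unfold tcarry
  split_ifs <;> simp

lemma tcarry_eq_one_iff_exists_carriesTo :
    tcarry m x y i = 1 ↔ ∃ j, i ≤ j + m ∧ CarriesTo x y j i := by
  simp [tcarry, CarriesTo]

lemma tcarry_eq_carry_iff :
    tcarry m x y i = carry x y i ↔ ∀ j, CarriesTo x y j i → i ≤ j + m := by
  have eq_iff : tcarry m x y i = carry x y i ↔ (tcarry m x y i = 1 ↔ carry x y i = 1) := by
    have := tcarry_le_one m x y i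
    have := carry_le_one x y i
    omega
  rw [eq_iff, tcarry_eq_one_iff_exists_carriesTo, carry_eq_one_iff_exists_carriesTo]
  constructor
  · intro h j hj
    obtain ⟨k, hk, hki⟩ := h.2 ⟨j, hj⟩
    rwa [hj.unique hki]
  · exact fun h ↦ exists_congr fun j ↦ and_iff_right_of_imp (h j)

lemma avoids_iff_forall_not_carriesTo :
    avoids m n x y ↔ ∀ j, j + m + 1 ≤ n → ¬ CarriesTo x y j (j + m + 1) := by
  refine forall₂_congr fun j _ ↦ not_congr ?_
  have hx := bitd_lt_two x j
  have hy := bitd_lt_two y j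
  have two_iff : bitd x j + bitd y j = 2 ↔ bitd x j = 1 ∧ bitd y j = 1 := by omega
  simp only [CarriesTo, two_iff, and_assoc, Nat.lt_succ_iff, Nat.le_add_right, true_and]

lemma avoids_iff_forall_carriesTo_le :
    avoids m n x y ↔ ∀ i ≤ n, ∀ j, CarriesTo x y j i → i ≤ j + m := by
  rw [avoids_iff_forall_not_carriesTo]
  constructor
  · intro h i hi j hj
    by_contra! hlt
    exact h j (Nat.le_trans hlt hi) (hj.mono (by omega) hlt)
  · intro h j hj hcarries
    have := h _ hj j hcarries
    omega

lemma tadd_eq_add_mod_iff (N m x y : ℕ) :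
    tadd N m x y = (x + y) % 2 ^ N ↔ ∀ i < N, tcarry m x y i = carry x y i := by
  rw [tadd, sum_mul_pow_eq_mod_pow_iff fun i _ ↦ Nat.mod_lt _ two_pos]
  refine forall₂_congr fun i _ ↦ ?_
  rw [← bitd, bitd_add]
  have := tcarry_le_one m x y i
  have := carry_le_one x y i
  omega

lemma tadd_eq_add_mod_iff_avoids (n m x y : ℕ) :
    tadd (n + 1) m x y = (x + y) % 2 ^ (n + 1) ↔ avoids m n x y := by
  simp only [tadd_eq_add_mod_iff, tcarry_eq_carry_iff, avoids_iff_forall_carriesTo_le,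
    Nat.lt_succ_iff]

end Carry

section Counting

lemma sum_range_mul_mod {M : Type*} [AddCommMonoid M] (f : ℕ → M) (c n : ℕ) :
    ∑ a ∈ Finset.range (c * n), f (a % n) = c • ∑ a ∈ Finset.range n, f a := by
  induction c with
  | zero => simp
  | succ c ih =>
    rw [Nat.succ_mul, Finset.sum_range_add, ih, succ_nsmul]
    congr 1
    refine Finset.sum_congr rfl fun a ha ↦ ?_
    rw [Nat.mul_add_mod_self_right, Nat.mod_eq_of_lt (Finset.mem_range.1 ha)]

lemma card_filter_range_mul_product_mod (P : ℕ → ℕ → Prop) [∀ a b, Decidable (P a b)]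
    (c d k n : ℕ) :
    ((Finset.range (c * k) ×ˢ Finset.range (d * n)).filter fun p ↦ P (p.1 % k) (p.2 % n)).card =
      c * d * ((Finset.range k ×ˢ Finset.range n).filter fun p ↦ P p.1 p.2).card := by
  simp only [Finset.card_filter, Finset.sum_product]
  calc ∑ a ∈ Finset.range (c * k), ∑ b ∈ Finset.range (d * n), (if P (a % k) (b % n) then 1 else 0)
      = ∑ a ∈ Finset.range (c * k), d * ∑ b ∈ Finset.range n, (if P (a % k) b then 1 else 0) :=
        Finset.sum_congr rfl fun a _ ↦ sum_range_mul_mod (fun b ↦ if P (a % k) b then 1 else 0) d n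
    _ = c * ∑ a ∈ Finset.range k, d * ∑ b ∈ Finset.range n, (if P a b then 1 else 0) :=
        sum_range_mul_mod (fun a ↦ d * ∑ b ∈ Finset.range n, (if P a b then 1 else 0)) c k
    _ = c * d * ∑ a ∈ Finset.range k, ∑ b ∈ Finset.range n, (if P a b then 1 else 0) := by
        rw [← Finset.mul_sum, mul_assoc]

lemma avoids_mod_two_pow (m n x y : ℕ) :
    avoids m n (x % 2 ^ n) (y % 2 ^ n) ↔ avoids m n x y := by
  have hsum (i : ℕ) (hi : i < n) :
      bitd (x % 2 ^ n) i + bitd (y % 2 ^ n) i = bitd x i + bitd y i := by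
    rw [bitd_mod_two_pow x hi, bitd_mod_two_pow y hi]
  refine forall₂_congr fun j hj ↦ not_congr (and_congr ?_ (forall₃_congr fun k _ hk ↦ ?_))
  · rw [hsum j (by omega)]
  · rw [hsum k (by omega)]

open Classical in
lemma card_avoids_two_pow_succ (m n : ℕ) :
    ((Finset.range (2 ^ (n + 1)) ×ˢ Finset.range (2 ^ (n + 1))).filter fun p ↦
      avoids m n p.1 p.2).card = 4 * A m n := by
  simpa only [A, avoids_mod_two_pow, ← pow_succ', Nat.reduceMul] using
    card_filter_range_mul_product_mod (avoids m n) 2 2 (2 ^ n) (2 ^ n)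

end Counting

open Classical in
/-- the number of pairs of `N`-bit numbers on which `m`-truncated
addition agrees with ordinary addition mod `2^N` is `4 · A_m(N-1)`; equivalently
the agreement probability for uniform inputs is `A_m(N-1)/4^(N-1)`. -/
theorem card_agree_eq (N m : ℕ) (hN : 1 ≤ N) (hm : 1 ≤ m) :
    ((Finset.range (2 ^ N) ×ˢ Finset.range (2 ^ N)).filter fun p =>
        tadd N m p.1 p.2 = (p.1 + p.2) % 2 ^ N).card = 4 * A m (N - 1) := by
  obtain ⟨n, rfl⟩ := Nat.exists_eq_add_of_le' hN
  simp only [tadd_eq_add_mod_iff_avoids, Nat.add_sub_cancel]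
  exact card_avoids_two_pow_succ m n
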